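/- For b ≥ max{c, 2c-1} > 0, μ ∈ [-1,1], and every n ∈ ℕ, the polynomial σ_n^{(b-1,c)}(f_μ, z) = Σ_{k=0}^n (B_{n-k}/B_n)((μ)_k/k!) z^k satisfies (1-z)^μ σ_n^{(b-1,c)}(f_μ, z) ≺ (1-z)^μ on the unit disc; equivalently, |1 - ((1-z) σ_n^{(b-1,c)}(f_μ, z)^{1/μ})| ≤ 1 for μ ≠ 0. -/

import Mathlib

open Complex Metric

/-- Pochhammer symbol (rising factorial). -/
def poch (x : ℝ) (k : ℕ) : ℝ := ∏ i ∈ Finset.range k, (x + i)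

/-- Cesàro normalizing constants `B_0 = 1`, `B_k = ((b)_k/(c)_k)(1+b-c)/b`. -/
noncomputable def cesB (b c : ℝ) : ℕ → ℝ
  | 0 => 1
  | (k + 1) => (poch b (k + 1) / poch c (k + 1)) * (1 + b - c) / b

/-- `σ_n^{(b-1,c)}(f_μ, z) = Σ_{k=0}^n (B_{n-k}/B_n)((μ)_k/k!) z^k`. -/
noncomputable def sigmaMu (b c μ : ℝ) (n : ℕ) (z : ℂ) : ℂ :=
  ∑ k ∈ Finset.range (n + 1),
    (((cesB b c (n - k) / cesB b c n) * (poch μ k / (Nat.factorial k : ℝ)) : ℝ) : ℂ) * z ^ k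

/-- Subordination on the unit disc: `F ≺ G` iff `F = G ∘ ω` for some analytic
`ω : 𝔻 → 𝔻` with `ω(0) = 0`. -/
def Subord (F G : ℂ → ℂ) : Prop :=
  ∃ ω : ℂ → ℂ, DifferentiableOn ℂ ω (ball (0 : ℂ) 1) ∧ ω 0 = 0 ∧
    (∀ z ∈ ball (0 : ℂ) 1, ω z ∈ ball (0 : ℂ) 1) ∧
    ∀ z ∈ ball (0 : ℂ) 1, F z = G (ω z)


theorem core_subord (μ : ℝ) (hμ : μ ≠ 0) (P P' Q : ℂ → ℂ) (p p' q : ℝ → ℝ)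
    (hP : ∀ z, HasDerivAt P (P' z) z) (hP'c : Differentiable ℂ P')
    (hp : ∀ x, HasDerivAt p (p' x) x)
    (hP0 : P 0 = 1) (hp0 : p 0 = 1)
    (hid : ∀ z, (1 - z) * P' z - μ * P z = - (μ * Q z))
    (hidr : ∀ x, (1 - x) * p' x - μ * p x = - (μ * q x))
    (hQ : ∀ z, ‖Q z‖ ≤ q ‖z‖)
    (hPne : ∀ z ∈ ball (0 : ℂ) 1, P z ≠ 0)
    (hppos : ∀ x : ℝ, 0 ≤ x → x < 1 → 0 < p x)
    (hle : ∀ z ∈ ball (0 : ℂ) 1, ‖P z‖ ^ (1 / μ - 1) ≤ p ‖z‖ ^ (1 / μ - 1)) :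
    Subord (fun z => (1 - z) ^ (μ : ℂ) * P z) (fun z => (1 - z) ^ (μ : ℂ)) := by
  have hμc : (μ : ℂ) ≠ 0 := by exact_mod_cast hμ
  have h0 : (0 : ℂ) ∈ ball (0 : ℂ) 1 := by simp
  have hPd : Differentiable ℂ P := fun z => (hP z).differentiableAt
  have hquot : DifferentiableOn ℂ (fun z => P' z / P z) (ball (0 : ℂ) 1) :=
    hP'c.differentiableOn.div hPd.differentiableOn hPne
  obtain ⟨L, hL0, hL⟩ := hquot.isExactOn_ball.with_val_at 0 0
  have hexp : ∀ z ∈ ball (0 : ℂ) 1, exp (L z) = P z := by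
    have key : (ball (0 : ℂ) 1).EqOn (fun z => P z * exp (- L z)) (fun _ => 1) := by
      have hd : ∀ z ∈ ball (0 : ℂ) 1, HasDerivAt (fun z => P z * exp (- L z)) 0 z := by
        intro z hz
        have := (hP z).mul ((hL z hz).neg.cexp)
        refine this.congr_deriv ?_
        have := hPne z hz
        field_simp
        ring
      refine isOpen_ball.eqOn_of_deriv_eq (convex_ball _ _).isPreconnected
        (fun z hz => (hd z hz).differentiableAt.differentiableWithinAt)
        (differentiableOn_const _) (fun z hz => ?_) h0 ?_
      · rw [(hd z hz).deriv]; simp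
      · simp [hL0, hP0]
    intro z hz
    have := key hz
    simp only [exp_neg] at this
    field_simp at this
    exact this.symm
  set E : ℂ → ℂ := fun z => exp (L z / μ) with hE
  set h : ℂ → ℂ := fun z => 1 - (1 - z) * E z with hh
  have hEd : ∀ z ∈ ball (0 : ℂ) 1, HasDerivAt E (E z * (P' z / P z / μ)) z := by
    intro z hz
    exact ((hL z hz).div_const (μ : ℂ)).cexp
  have hhd : ∀ z ∈ ball (0 : ℂ) 1, HasDerivAt h (Q z * exp ((1 / μ - 1) * L z)) z := by
    intro z hz
    have := ((((hasDerivAt_id z).const_sub 1).mul (hEd z hz)).const_sub 1)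
    refine this.congr_deriv ?_
    have hne := hPne z hz
    have e1 : exp ((1 / μ - 1) * L z) = E z / P z := by
      rw [← hexp z hz, hE, ← exp_sub]; congr 1; ring
    rw [e1]
    simp only [id]
    have := hid z
    field_simp
    linear_combination (-E z) * this
  have hhnorm : ∀ z ∈ ball (0 : ℂ) 1,
      ‖Q z * exp ((1 / μ - 1) * L z)‖ ≤ q ‖z‖ * p ‖z‖ ^ (1 / μ - 1) := by
    intro z hz
    have e : ‖exp ((1 / μ - 1) * L z)‖ = ‖P z‖ ^ (1 / μ - 1) := by
      rw [← hexp z hz, norm_exp, norm_exp, ← Real.exp_mul]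
      congr 1
      have : ((1 / μ - 1 : ℂ)) = ((1 / μ - 1 : ℝ) : ℂ) := by push_cast; rfl
      rw [this, re_ofReal_mul]; ring
    rw [norm_mul, e]
    exact mul_le_mul (hQ z) (hle z hz) (by positivity) ((norm_nonneg _).trans (hQ z))
  set H : ℝ → ℝ := fun x => 1 - (1 - x) * p x ^ (1 / μ) with hH
  have hHd : ∀ x : ℝ, 0 ≤ x → x < 1 → HasDerivAt H (q x * p x ^ (1 / μ - 1)) x := by
    intro x hx0 hx1
    have hpx := hppos x hx0 hx1
    have := ((((hasDerivAt_id x).const_sub 1).mul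
      ((hp x).rpow_const (p := 1 / μ) (Or.inl hpx.ne'))).const_sub 1)
    refine this.congr_deriv ?_
    have e1 : p x ^ (1 / μ) = p x ^ (1 / μ - 1) * p x := by
      rw [Real.rpow_sub_one hpx.ne']; field_simp
    rw [e1]
    simp only [id]
    have := hidr x
    field_simp
    linear_combination (-1 : ℝ) * this
  have hbound : ∀ z ∈ ball (0 : ℂ) 1, ‖h z‖ ≤ H ‖z‖ := by
    intro z hz
    have hz1 : ‖z‖ < 1 := by simpa using hz
    have hmem : ∀ t ∈ Set.Icc (0 : ℝ) 1, (t : ℂ) * z ∈ ball (0 : ℂ) 1 ∧ 0 ≤ t * ‖z‖ ∧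
        t * ‖z‖ < 1 ∧ ‖(t : ℂ) * z‖ = t * ‖z‖ := by
      intro t ht
      have e : ‖(t : ℂ) * z‖ = t * ‖z‖ := by
        rw [norm_mul, norm_real, Real.norm_of_nonneg ht.1]
      have l : t * ‖z‖ < 1 := by nlinarith [norm_nonneg z, ht.1, ht.2]
      refine ⟨by rw [mem_ball_zero_iff, e]; exact l, mul_nonneg ht.1 (norm_nonneg _), l, e⟩
    have d1 : ∀ t ∈ Set.Icc (0 : ℝ) 1, HasDerivAt (fun t : ℝ => h (t * z))
        (Q (t * z) * exp ((1 / μ - 1) * L (t * z)) * z) t := by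
      intro t ht
      have a : HasDerivAt (fun w : ℂ => w * z) z (t : ℂ) := by
        simpa using (hasDerivAt_id (t : ℂ)).mul_const z
      exact (HasDerivAt.comp (t : ℂ) (hhd _ (hmem t ht).1) a).comp_ofReal
    have d2 : ∀ t ∈ Set.Icc (0 : ℝ) 1, HasDerivAt (fun t : ℝ => H (t * ‖z‖))
        (q (t * ‖z‖) * p (t * ‖z‖) ^ (1 / μ - 1) * ‖z‖) t := by
      intro t ht
      have a : HasDerivAt (fun w : ℝ => w * ‖z‖) ‖z‖ t := by
        simpa using (hasDerivAt_id t).mul_const ‖z‖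
      exact HasDerivAt.comp (h₂ := H) t (hHd _ (hmem t ht).2.1 (hmem t ht).2.2.1) a
    have := image_norm_le_of_norm_deriv_right_le_deriv_boundary' (a := 0) (b := 1)
      (f := fun t : ℝ => h (t * z))
      (f' := fun t : ℝ => Q (t * z) * exp ((1 / μ - 1) * L (t * z)) * z)
      (B := fun t : ℝ => H (t * ‖z‖))
      (B' := fun t : ℝ => q (t * ‖z‖) * p (t * ‖z‖) ^ (1 / μ - 1) * ‖z‖)
      (fun t ht => (d1 t ht).continuousAt.continuousWithinAt)
      (fun t ht => (d1 t ⟨ht.1, ht.2.le⟩).hasDerivWithinAt)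
      (by simp [hh, hH, hE, hL0, hp0])
      (fun t ht => (d2 t ht).continuousAt.continuousWithinAt)
      (fun t ht => (d2 t ⟨ht.1, ht.2.le⟩).hasDerivWithinAt)
      (by
        intro t ht
        have m := hmem t ⟨ht.1, ht.2.le⟩
        have b := hhnorm _ m.1
        rw [m.2.2.2] at b
        rw [norm_mul]
        exact mul_le_mul_of_nonneg_right b (norm_nonneg _))
      (x := 1) ⟨zero_le_one, le_rfl⟩
    simpa using this
  have hmaps : ∀ z ∈ ball (0 : ℂ) 1, h z ∈ ball (0 : ℂ) 1 := by
    intro z hz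
    have hz1 : ‖z‖ < 1 := by simpa using hz
    rw [mem_ball_zero_iff]
    refine (hbound z hz).trans_lt ?_
    have := Real.rpow_pos_of_pos (hppos ‖z‖ (norm_nonneg _) hz1) (1 / μ)
    have := mul_pos (sub_pos.2 hz1) this
    simp only [hH]; linarith
  have slit : ∀ w ∈ ball (0 : ℂ) 1, 1 - w ∈ slitPlane := by
    intro w hw
    left
    have : ‖w‖ < 1 := by simpa using hw
    have := (re_le_norm w)
    simp; linarith
  have hlog : (ball (0 : ℂ) 1).EqOn (fun z => log (1 - h z)) (fun z => log (1 - z) + L z / μ) := by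
    have ha : ∀ z ∈ ball (0 : ℂ) 1, HasDerivAt (fun z => log (1 - h z))
        (-(Q z * exp ((1 / μ - 1) * L z)) / (1 - h z)) z := fun z hz =>
      ((hhd z hz).const_sub 1).clog (slit _ (hmaps z hz))
    have hb : ∀ z ∈ ball (0 : ℂ) 1, HasDerivAt (fun z => log (1 - z) + L z / μ)
        (-1 / (1 - z) + P' z / P z / μ) z := fun z hz =>
      (((hasDerivAt_id z).const_sub 1).clog (slit _ hz)).add ((hL z hz).div_const (μ : ℂ))
    refine isOpen_ball.eqOn_of_deriv_eq (convex_ball _ _).isPreconnected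
      (fun z hz => (ha z hz).differentiableAt.differentiableWithinAt)
      (fun z hz => (hb z hz).differentiableAt.differentiableWithinAt) (fun z hz => ?_) h0 ?_
    · rw [(ha z hz).deriv, (hb z hz).deriv]
      have hne := hPne z hz
      have e1 : exp ((1 / μ - 1) * L z) = E z / P z := by
        rw [← hexp z hz, hE, ← exp_sub]; congr 1; ring
      have e2 : 1 - h z = (1 - z) * E z := by simp [hh]
      have hz' : 1 - z ≠ 0 := slitPlane_ne_zero (slit z hz)
      have hEz : E z ≠ 0 := exp_ne_zero _
      rw [e1, e2]
      have := hid z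
      field_simp
      linear_combination (-1 : ℂ) * this
    · simp [hh, hE, hL0]
  refine ⟨h, fun z hz => (hhd z hz).differentiableAt.differentiableWithinAt, ?_, hmaps, ?_⟩
  · simp [hh, hE, hL0]
  · intro z hz
    have n1 := slitPlane_ne_zero (slit z hz)
    have n2 := slitPlane_ne_zero (slit _ (hmaps z hz))
    have := hlog hz
    simp only at this
    simp only
    rw [cpow_def_of_ne_zero n1, cpow_def_of_ne_zero n2, this, ← hexp z hz, ← exp_add]
    congr 1
    field_simp

noncomputable def mkP (d : ℕ → ℝ) (n : ℕ) : Polynomial ℝ :=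
  ∑ k ∈ Finset.range (n + 1), Polynomial.C (d k) * Polynomial.X ^ k

theorem mkP_coeff (d : ℕ → ℝ) (n : ℕ) (hd : ∀ k, n < k → d k = 0) (k : ℕ) :
    (mkP d n).coeff k = d k := by
  simp only [mkP, Polynomial.finsetSum_coeff, Polynomial.coeff_C_mul, Polynomial.coeff_X_pow]
  simp only [mul_ite, mul_one, mul_zero, Finset.sum_ite_eq, Finset.mem_range]
  split_ifs with h
  · rfl
  · exact (hd k (by omega)).symm

theorem mkP_aeval (d : ℕ → ℝ) (n : ℕ) (z : ℂ) :
    Polynomial.aeval z (mkP d n) = ∑ k ∈ Finset.range (n + 1), (d k : ℂ) * z ^ k := by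
  simp [mkP]

theorem mkP_eval (d : ℕ → ℝ) (n : ℕ) (x : ℝ) :
    (mkP d n).eval x = ∑ k ∈ Finset.range (n + 1), d k * x ^ k := by
  simp [mkP, Polynomial.eval_finsetSum]

theorem mkP_norm_le (d : ℕ → ℝ) (n : ℕ) (hd : ∀ k, 0 ≤ d k) (z : ℂ) :
    ‖Polynomial.aeval z (mkP d n)‖ ≤ (mkP d n).eval ‖z‖ := by
  rw [mkP_aeval, mkP_eval]
  refine (norm_sum_le _ _).trans (le_of_eq (Finset.sum_congr rfl fun k _ => ?_))
  rw [norm_mul, norm_pow, norm_real, Real.norm_of_nonneg (hd k)]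

theorem mkP_eval_le (d : ℕ → ℝ) (n : ℕ) (hd : ∀ k, 0 ≤ d k) (x : ℝ) (h0 : 0 ≤ x) (h1 : x ≤ 1) :
    (mkP d n).eval x ≤ ∑ k ∈ Finset.range (n + 1), d k := by
  rw [mkP_eval]
  exact Finset.sum_le_sum fun k _ => mul_le_of_le_one_right (hd k) (pow_le_one₀ h0 h1)

noncomputable def aCo (μ : ℝ) (k : ℕ) : ℝ := poch μ k / (Nat.factorial k : ℝ)

theorem aCo_zero (μ : ℝ) : aCo μ 0 = 1 := by simp [aCo, poch]

theorem aCo_succ (μ : ℝ) (k : ℕ) : (k + 1) * aCo μ (k + 1) = (μ + k) * aCo μ k := by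
  have : (Nat.factorial k : ℝ) ≠ 0 := by positivity
  have : (k + 1 : ℝ) ≠ 0 := by positivity
  simp only [aCo, poch, Finset.prod_range_succ, Nat.factorial_succ]
  push_cast
  field_simp

theorem aCo_sign (μ : ℝ) (h : -1 ≤ μ) (k : ℕ) : 0 ≤ μ * aCo μ (k + 1) := by
  induction k with
  | zero =>
    have := aCo_succ μ 0
    simp [aCo_zero] at this
    simp [this, mul_self_nonneg]
  | succ k ih =>
    have := aCo_succ μ (k + 1)
    push_cast at this
    have h2 : 0 ≤ ((k : ℝ) + 1 + 1) * (μ * aCo μ (k + 1 + 1)) := by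
      have : ((k : ℝ) + 1 + 1) * (μ * aCo μ (k + 1 + 1)) =
        (μ + (k + 1)) * (μ * aCo μ (k + 1)) := by linear_combination μ * this
      rw [this]
      exact mul_nonneg (by have := (Nat.cast_nonneg (α := ℝ) k); linarith) ih
    exact nonneg_of_mul_nonneg_right h2 (by positivity)

theorem aCo_sum (μ : ℝ) (n : ℕ) :
    μ * ∑ k ∈ Finset.range (n + 1), aCo μ k = (n + 1) * aCo μ (n + 1) := by
  induction n with
  | zero => have := aCo_succ μ 0; simp at this; simp [this]
  | succ n ih =>
    rw [Finset.sum_range_succ, mul_add, ih]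
    have := aCo_succ μ (n + 1)
    push_cast at this ⊢
    linarith

theorem sub_poly (μ : ℝ) (hμ : μ ≠ 0) (hμ1 : -1 ≤ μ) (hμ2 : μ ≤ 1) (A : ℕ → ℝ) (n : ℕ)
    (hA : Antitone A) (hA0 : A 0 = 1) (hAn : ∀ k, n < k → A k = 0) :
    Subord (fun z => (1 - z) ^ (μ : ℂ) *
        Polynomial.aeval z (mkP (fun k => A k * aCo μ k) n))
      (fun z => (1 - z) ^ (μ : ℂ)) := by
  have hAnn : ∀ k, 0 ≤ A k := fun k => by
    rcases le_or_gt k n with h | h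
    · rw [← hAn (n + 1) (by omega)]; exact hA (by omega)
    · exact (hAn k h).ge
  have hA1 : ∀ k, A k ≤ 1 := fun k => by rw [← hA0]; exact hA (Nat.zero_le k)
  set d : ℕ → ℝ := fun k => A k * aCo μ k with hd
  have hd0 : d 0 = 1 := by simp [hd, hA0, aCo_zero]
  have hdn : ∀ k, n < k → d k = 0 := fun k hk => by simp [hd, hAn k hk]
  set e : ℕ → ℝ := fun k => (k + 1) * aCo μ (k + 1) * (A k - A (k + 1)) / μ with he
  have hen : ∀ k, n < k → e k = 0 := fun k hk => by
    simp [he, hAn k hk, hAn (k + 1) (by omega)]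
  have hepos : ∀ k, 0 ≤ e k := fun k => by
    have h1 := aCo_sign μ hμ1 k
    have h2 : 0 ≤ A k - A (k + 1) := sub_nonneg.2 (hA (Nat.le_succ k))
    have : e k = (k + 1) * (μ * aCo μ (k + 1)) * (A k - A (k + 1)) / μ ^ 2 := by
      simp only [he]; field_simp
    rw [this]; positivity
  have hpoly : (1 - Polynomial.X) * (mkP d n).derivative - Polynomial.C μ * mkP d n
      = - (Polynomial.C μ * mkP e n) := by
    ext k
    have := aCo_succ μ k
    rcases k with _ | k
    · simp only [sub_mul, one_mul, Polynomial.coeff_sub, Polynomial.coeff_neg,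
        Polynomial.coeff_C_mul, Polynomial.coeff_X_mul_zero, Polynomial.coeff_derivative,
        mkP_coeff d n hdn, mkP_coeff e n hen]
      simp only [hd, he]
      field_simp
      push_cast at *
      linear_combination (A 0) * this
    · simp only [sub_mul, one_mul, Polynomial.coeff_sub, Polynomial.coeff_neg,
        Polynomial.coeff_C_mul, Polynomial.coeff_X_mul, Polynomial.coeff_derivative,
        mkP_coeff d n hdn, mkP_coeff e n hen]
      simp only [hd, he]
      field_simp
      push_cast at *
      linear_combination (A (k + 1)) * this
  have hrep : ∀ z : ℂ, (1 - z) * Polynomial.aeval z (mkP d n).derivative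
      - μ * Polynomial.aeval z (mkP d n) = - (μ * Polynomial.aeval z (mkP e n)) := by
    intro z
    have := congrArg (Polynomial.aeval z) hpoly
    simpa using this
  have hrepr : ∀ x : ℝ, (1 - x) * (mkP d n).derivative.eval x
      - μ * (mkP d n).eval x = - (μ * (mkP e n).eval x) := by
    intro z
    have := congrArg (Polynomial.eval z) hpoly
    simpa using this
  have hp0 : (mkP d n).eval 0 = 1 := by
    rw [← Polynomial.coeff_zero_eq_eval_zero, mkP_coeff d n hdn, hd0]
  have hP0 : Polynomial.aeval (0 : ℂ) (mkP d n) = 1 := by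
    rw [mkP_aeval, Finset.sum_range_succ']
    simp [hd0]
  have hof : ∀ x : ℝ, Polynomial.aeval (x : ℂ) (mkP d n) = (((mkP d n).eval x : ℝ) : ℂ) := by
    intro x; rw [mkP_aeval, mkP_eval]; push_cast; rfl
  have main : (∀ z ∈ ball (0 : ℂ) 1, Polynomial.aeval z (mkP d n) ≠ 0) ∧
      (∀ x : ℝ, 0 ≤ x → x < 1 → 0 < (mkP d n).eval x) ∧
      (∀ z ∈ ball (0 : ℂ) 1, ‖Polynomial.aeval z (mkP d n)‖ ^ (1 / μ - 1) ≤
        (mkP d n).eval ‖z‖ ^ (1 / μ - 1)) := by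
    rcases lt_or_gt_of_ne hμ with hneg | hpos
    · set g : ℕ → ℝ := fun k => - d (k + 1) with hg
      have hgn : ∀ k, n < k → g k = 0 := fun k hk => by simp [hg, hdn (k + 1) (by omega)]
      have hap : ∀ k, 0 ≤ - aCo μ (k + 1) := fun k => by
        have := aCo_sign μ hμ1 k
        nlinarith
      have hgpos : ∀ k, 0 ≤ g k := fun k => by
        have := mul_nonneg (hAnn (k + 1)) (hap k)
        simp only [hg, hd]; linarith
      have hgsum : ∑ k ∈ Finset.range (n + 1), g k ≤ 1 := by
        have h1 : ∑ k ∈ Finset.range (n + 1), g k ≤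
            ∑ k ∈ Finset.range (n + 1), - aCo μ (k + 1) := by
          refine Finset.sum_le_sum fun k _ => ?_
          have := mul_le_mul_of_nonneg_right (hA1 (k + 1)) (hap k)
          simp only [hg, hd]; linarith
        have h2 := aCo_sum μ (n + 1)
        rw [Finset.sum_range_succ', aCo_zero] at h2
        have h3 := hap (n + 1)
        rw [Finset.sum_neg_distrib (f := fun k => aCo μ (k + 1))] at h1
        have h4 : 0 ≤ ∑ k ∈ Finset.range (n + 1), aCo μ (k + 1) + 1 := by
          by_contra hcon
          push Not at hcon
          have h5 := mul_pos_of_neg_of_neg hneg hcon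
          have h6 : 0 ≤ ((n + 1 : ℕ) + 1 : ℝ) * (- aCo μ (n + 1 + 1)) :=
            mul_nonneg (by positivity) h3
          linarith
        linarith
      have hfac : mkP d n = 1 - Polynomial.X * mkP g n := by
        ext k
        rcases k with _ | k
        · simp [mkP_coeff d n hdn, hd0]
        · simp only [Polynomial.coeff_sub, Polynomial.coeff_X_mul, mkP_coeff d n hdn,
            mkP_coeff g n hgn]
          simp [Polynomial.coeff_one, hg]
      have hxr : ∀ x : ℝ, 0 ≤ x → x < 1 → 0 < (mkP d n).eval x := by
        intro x h0 h1
        have := (mkP_eval_le g n hgpos x h0 h1.le).trans hgsum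
        rw [hfac]
        simp
        nlinarith
      have hlow : ∀ z : ℂ, (mkP d n).eval ‖z‖ ≤ ‖Polynomial.aeval z (mkP d n)‖ := by
        intro z
        rw [hfac]
        simp only [Polynomial.eval_sub, Polynomial.eval_one, Polynomial.eval_mul,
          Polynomial.eval_X, map_sub, map_one, map_mul, Polynomial.aeval_X]
        have h1 := norm_sub_norm_le (1 : ℂ) (z * Polynomial.aeval z (mkP g n))
        rw [norm_one, norm_mul] at h1
        have h2 := mul_le_mul_of_nonneg_left (mkP_norm_le g n hgpos z) (norm_nonneg z)
        linarith
      refine ⟨fun z hz h => ?_, hxr, fun z hz => ?_⟩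
      · have hz1 : ‖z‖ < 1 := by simpa using hz
        have := (hxr _ (norm_nonneg z) hz1).trans_le (hlow z)
        simp [h] at this
      · have hz1 : ‖z‖ < 1 := by simpa using hz
        refine Real.rpow_le_rpow_of_nonpos (hxr _ (norm_nonneg z) hz1) (hlow z) ?_
        have := one_div_neg.2 hneg
        linarith
    · have hap : ∀ k, 0 ≤ aCo μ k := fun k => by
        rcases k with _ | k
        · simp [aCo_zero]
        · exact nonneg_of_mul_nonneg_right (aCo_sign μ hμ1 k) hpos
      have hadec : ∀ k, aCo μ (k + 1) ≤ aCo μ k := fun k => by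
        have h1 := aCo_succ μ k
        have h2 := hap k
        have h3 : (0 : ℝ) < k + 1 := by positivity
        refine le_of_mul_le_mul_left ?_ h3
        rw [h1]
        nlinarith
      have hdpos : ∀ k, 0 ≤ d k := fun k => mul_nonneg (hAnn k) (hap k)
      set g : ℕ → ℝ := fun k => d k - d (k + 1) with hg
      have hgn : ∀ k, n < k → g k = 0 := fun k hk => by
        simp [hg, hdn k hk, hdn (k + 1) (by omega)]
      have hgpos : ∀ k, 0 ≤ g k := fun k =>
        sub_nonneg.2 (mul_le_mul (hA (Nat.le_succ k)) (hadec k) (hap _) (hAnn _))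
      have hgsum : ∑ k ∈ Finset.range (n + 1), g k = 1 := by
        rw [Finset.sum_range_sub', hd0, hdn (n + 1) (by omega), sub_zero]
      have hfac : (1 - Polynomial.X) * mkP d n = 1 - Polynomial.X * mkP g n := by
        ext k
        rcases k with _ | k
        · simp [sub_mul, mkP_coeff d n hdn, hd0]
        · simp only [sub_mul, one_mul, Polynomial.coeff_sub, Polynomial.coeff_X_mul,
            mkP_coeff d n hdn, mkP_coeff g n hgn]
          simp [Polynomial.coeff_one, hg]
      have hne : ∀ z ∈ ball (0 : ℂ) 1, Polynomial.aeval z (mkP d n) ≠ 0 := by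
        intro z hz h
        have hz1 : ‖z‖ < 1 := by simpa using hz
        have h1 := congrArg (Polynomial.aeval z) hfac
        simp only [map_sub, map_one, map_mul, Polynomial.aeval_X, h, mul_zero] at h1
        have h2 : ‖z * Polynomial.aeval z (mkP g n)‖ = 1 := by
          rw [← sub_eq_zero.1 h1.symm, norm_one]
        rw [norm_mul] at h2
        have h3 := (mkP_norm_le g n hgpos z).trans
          ((mkP_eval_le g n hgpos _ (norm_nonneg z) hz1.le).trans hgsum.le)
        nlinarith [norm_nonneg z]
      have hle := mkP_norm_le d n hdpos
      refine ⟨hne, fun x h0 h1 => ?_, fun z hz => ?_⟩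
      · have hx : (x : ℂ) ∈ ball (0 : ℂ) 1 := by
          rw [mem_ball_zero_iff, norm_real, Real.norm_of_nonneg h0]; exact h1
        have := (norm_pos_iff.2 (hne _ hx)).trans_le (hle x)
        rwa [norm_real, Real.norm_of_nonneg h0] at this
      · refine Real.rpow_le_rpow (norm_nonneg _) (hle z) ?_
        have := one_le_one_div hpos hμ2
        linarith
  exact core_subord μ hμ (fun z => Polynomial.aeval z (mkP d n))
    (fun z => Polynomial.aeval z (mkP d n).derivative) (fun z => Polynomial.aeval z (mkP e n))
    (fun x => (mkP d n).eval x) (fun x => (mkP d n).derivative.eval x)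
    (fun x => (mkP e n).eval x) (fun z => Polynomial.hasDerivAt_aeval _ z)
    (Polynomial.differentiable_aeval _) (fun x => Polynomial.hasDerivAt _ x)
    hP0 hp0 hrep hrepr (mkP_norm_le e n hepos) main.1 main.2.1 main.2.2

theorem poch_pos (x : ℝ) (hx : 0 < x) (k : ℕ) : 0 < poch x k :=
  Finset.prod_pos fun i _ => by positivity

theorem cesB_pos (b c : ℝ) (hb : 0 < b) (hc : 0 < c) (hbc : c ≤ b) (k : ℕ) : 0 < cesB b c k := by
  rcases k with _ | k
  · simp [cesB]
  · have h1 := poch_pos b hb (k + 1)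
    have h2 := poch_pos c hc (k + 1)
    have h3 : 0 < 1 + b - c := by linarith
    simp only [cesB]; positivity

theorem cesB_mono (b c : ℝ) (hb : 0 < b) (hc : 0 < c) (hbc : c ≤ b) (hbc2 : 2 * c - 1 ≤ b) :
    Monotone (cesB b c) := by
  refine monotone_nat_of_le_succ fun k => ?_
  rcases k with _ | k
  · simp only [cesB, poch, zero_add, Finset.prod_range_one, Nat.cast_zero, add_zero]
    have : b / c * (1 + b - c) / b = (1 + b - c) / c := by field_simp
    rw [this, le_div_iff₀ hc]; linarith
  · have hp := cesB_pos b c hb hc hbc (k + 1)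
    have h1 : (0 : ℝ) < c + (k + 1 : ℕ) := by positivity
    have h2 := poch_pos c hc (k + 1)
    have : cesB b c (k + 1 + 1) =
        cesB b c (k + 1) * ((b + (k + 1 : ℕ)) / (c + (k + 1 : ℕ))) := by
      simp only [cesB]
      rw [show poch b (k + 1 + 1) = poch b (k + 1) * (b + (k + 1 : ℕ)) from
          Finset.prod_range_succ _ _,
        show poch c (k + 1 + 1) = poch c (k + 1) * (c + (k + 1 : ℕ)) from
          Finset.prod_range_succ _ _]
      field_simp
    rw [this]
    refine le_mul_of_one_le_right hp.le ?_
    rw [le_div_iff₀ h1]; linarith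

/-- For `b ≥ max{c, 2c-1} > 0` and `μ ∈ [-1,1]`,
`(1-z)^μ σ_n^{(b-1,c)}(f_μ, z) ≺ (1-z)^μ` for every `n`. -/
theorem stmt9 (b c μ : ℝ) (hb : b ≥ max c (2 * c - 1)) (hc : 0 < max c (2 * c - 1))
    (hμ1 : -1 ≤ μ) (hμ2 : μ ≤ 1) (n : ℕ) :
    Subord (fun z => (1 - z) ^ (μ : ℂ) * sigmaMu b c μ n z)
      (fun z => (1 - z) ^ (μ : ℂ)) := by
  have hbc : c ≤ b := (le_max_left _ _).trans hb
  have hbc2 : 2 * c - 1 ≤ b := (le_max_right _ _).trans hb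
  have hb0 : 0 < b := hc.trans_le hb
  have hc0 : 0 < c := by
    rcases lt_max_iff.1 hc with h | h <;> linarith
  have hB := cesB_pos b c hb0 hc0 hbc
  have hM := cesB_mono b c hb0 hc0 hbc hbc2
  set A : ℕ → ℝ := fun k => if k ≤ n then cesB b c (n - k) / cesB b c n else 0 with hAdef
  have hA0 : A 0 = 1 := by simp [hAdef, (hB n).ne']
  have hAn : ∀ k, n < k → A k = 0 := fun k hk => by simp [hAdef, not_le.2 hk]
  have hA : Antitone A := by
    intro i j hij
    simp only [hAdef]
    split_ifs with h1 h2 h2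
    · exact div_le_div_of_nonneg_right (hM (by omega)) (hB n).le
    · omega
    · exact (div_pos (hB _) (hB _)).le
    · exact le_rfl
  have hsig : ∀ z, sigmaMu b c μ n z = Polynomial.aeval z (mkP (fun k => A k * aCo μ k) n) := by
    intro z
    rw [mkP_aeval, sigmaMu]
    refine Finset.sum_congr rfl fun k hk => ?_
    have : k ≤ n := by have := Finset.mem_range.1 hk; omega
    simp only [hAdef, this, if_true, aCo]
  simp only [hsig]
  by_cases hμ : μ = 0
  · refine ⟨fun z => z, differentiableOn_id, rfl, fun z hz => hz, fun z hz => ?_⟩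
    have hz0 : ∀ k, aCo μ (k + 1) = 0 := fun k => by
      simp [aCo, poch, hμ, Finset.prod_range_succ']
    simp only [mkP_aeval]
    rw [Finset.sum_range_succ']
    simp [hz0, hA0, aCo_zero]
  · exact sub_poly μ hμ hμ1 hμ2 A n hA hA0 hAn
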